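/- Let 𝒫 ⊂ 𝒟 be a set of laws on ℝ^d whose Lebesgue densities are strictly positive Lebesgue-a.e. (so that 𝒫 together with its L¹-closure is mutually absolutely continuous), and let cl(𝒫) denote the closure of 𝒫 in the L¹ distance between Lebesgue densities. Then the closed fork-convex hull of the independent-product laws over 𝒫 contains the independent-product laws over the closure: cl-f-conv(⨂𝒫) ⊇ ⨂cl(𝒫). -/

import Mathlib

open MeasureTheory ProbabilityTheory Filter Finset Matrix
open scoped Classical

noncomputable section

namespace SeqTest

/-- `ℝ^d`. -/
abbrev RV (d : ℕ) := Fin d → ℝ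

/-- The sequence space `Ω = (ℝ^d)^ℕ`. -/
abbrev Seq (d : ℕ) := ℕ → RV d

variable (d : ℕ)


/-- The first `t` coordinates of a sequence. -/
def prefixMap (t : ℕ) : Seq d → (Fin t → RV d) := fun ω s => ω s

/-- The law of the first `t` coordinates under a sequential law `μ`. -/
def prefixLaw (μ : Measure (Seq d)) (t : ℕ) : Measure (Fin t → RV d) :=
  μ.map (prefixMap d t)

/-- The natural filtration of the coordinate process: `ℱ t = σ(X_0, …, X_{t-1})`. -/
def F : Filtration ℕ (inferInstance : MeasurableSpace (Seq d)) where
  seq t := ⨆ s ∈ Finset.range t, MeasurableSpace.comap (fun ω : Seq d => ω s) inferInstance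
  mono' := by
    intro i j hij
    exact biSup_mono fun s hs => Finset.mem_range.mpr
      (lt_of_lt_of_le (Finset.mem_range.mp hs) hij)
  le' := by
    intro t
    refine iSup₂_le fun s _ => ?_
    exact measurable_iff_comap_le.mp (measurable_pi_apply s)

/-- Local absolute continuity of sequential laws: every prefix law of `μ` is
absolutely continuous w.r.t. the corresponding prefix law of `Γ`. -/
def LocAC (μ Γ : Measure (Seq d)) : Prop := ∀ t, prefixLaw d μ t ≪ prefixLaw d Γ t

/-- The density (likelihood-ratio) process `Z_t^μ = d(μ|_t)/d(Γ|_t)` evaluated along the path. -/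
def Z (μ Γ : Measure (Seq d)) (t : ℕ) (ω : Seq d) : ℝ :=
  ((prefixLaw d μ t).rnDeriv (prefixLaw d Γ t) (prefixMap d t ω)).toReal

/-- The standard Gaussian measure on `ℝ^d`. -/
def stdGaussian : Measure (RV d) := Measure.pi fun _ => gaussianReal 0 1

/-- `Γ` is the law of an i.i.d. sequence of standard Gaussians: characterized through its
finite-dimensional rectangle probabilities. -/
def IsGamma (Γ : Measure (Seq d)) : Prop :=
  IsProbabilityMeasure Γ ∧
    ∀ (t : ℕ) (A : Fin t → Set (RV d)), (∀ s, MeasurableSet (A s)) →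
      prefixLaw d Γ t (Set.univ.pi A) = ∏ s, stdGaussian d (A s)

/-- `M` is a nonnegative supermartingale for the sequential law `μ`
(w.r.t. the natural filtration). -/
def IsNSM (μ : Measure (Seq d)) (M : ℕ → Seq d → ℝ) : Prop :=
  (∀ t ω, 0 ≤ M t ω) ∧ Supermartingale M (F d) μ

/-- `M` is a nonnegative martingale for the sequential law `μ`. -/
def IsNM (μ : Measure (Seq d)) (M : ℕ → Seq d → ℝ) : Prop :=
  (∀ t ω, 0 ≤ M t ω) ∧ Martingale M (F d) μ


/-- `R` is the `(s,h)`-fork-convex combination of `P` with `Q` (relative to the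
reference law `Γ`), described through its density process. -/
def IsFCC (Γ P Q : Measure (Seq d)) (s : ℕ) (h : Seq d → ℝ) (R : Measure (Seq d)) : Prop :=
  IsProbabilityMeasure P ∧ IsProbabilityMeasure Q ∧ LocAC d P Γ ∧ LocAC d Q Γ ∧
  Measurable[F d s] h ∧ (∀ ω, h ω ∈ Set.Icc (0 : ℝ) 1) ∧
  Γ {ω | h ω < 1 ∧ Z d Q Γ s ω = 0} = 0 ∧
  IsProbabilityMeasure R ∧ LocAC d R Γ ∧
  ∀ t : ℕ, (fun ω => Z d R Γ t ω) =ᵐ[Γ]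
    (fun ω => if t ≤ s then Z d P Γ t ω
      else h ω * Z d P Γ t ω + (1 - h ω) * Z d Q Γ t ω * (Z d P Γ s ω / Z d Q Γ s ω))

/-- A set of sequential laws is fork-convex if it is closed under fork-convex combinations. -/
def IsForkConvex (Γ : Measure (Seq d)) (S : Set (Measure (Seq d))) : Prop :=
  ∀ P ∈ S, ∀ Q ∈ S, ∀ (s : ℕ) (h : Seq d → ℝ) (R : Measure (Seq d)),
    IsFCC d Γ P Q s h R → R ∈ S

/-- The fork-convex hull: the smallest fork-convex set containing `𝔓`. -/
def fconv (Γ : Measure (Seq d)) (𝔓 : Set (Measure (Seq d))) : Set (Measure (Seq d)) :=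
  ⋂₀ {S | 𝔓 ⊆ S ∧ IsForkConvex d Γ S}

/-- Convergence of sequential laws: the density processes converge in `L¹(Γ)` at every fixed time. -/
def TendstoLocL1 (Γ : Measure (Seq d)) (Pn : ℕ → Measure (Seq d)) (P : Measure (Seq d)) : Prop :=
  ∀ t, Tendsto (fun n => ∫ ω, |Z d (Pn n) Γ t ω - Z d P Γ t ω| ∂Γ) atTop (nhds 0)

/-- The closed fork-convex hull: the closure of the fork-convex hull under local `L¹(Γ)`
convergence of density processes. -/
def clfconv (Γ : Measure (Seq d)) (𝔓 : Set (Measure (Seq d))) : Set (Measure (Seq d)) :=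
  {P | IsProbabilityMeasure P ∧ LocAC d P Γ ∧
    ∃ Pn : ℕ → Measure (Seq d), (∀ n, Pn n ∈ fconv d Γ 𝔓) ∧ TendstoLocL1 d Γ Pn P}

/-- `μ` is the law of an i.i.d. sequence with marginal `P`. -/
def IsIIDLaw (μ : Measure (Seq d)) (P : Measure (RV d)) : Prop :=
  IsProbabilityMeasure μ ∧
    ∀ (t : ℕ) (A : Fin t → Set (RV d)), (∀ s, MeasurableSet (A s)) →
      prefixLaw d μ t (Set.univ.pi A) = ∏ s, P (A s)

/-- `μ` is the law of an independent sequence with marginals `Ps 0, Ps 1, …`. -/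
def IsProductLaw (μ : Measure (Seq d)) (Ps : ℕ → Measure (RV d)) : Prop :=
  IsProbabilityMeasure μ ∧
    ∀ (t : ℕ) (A : Fin t → Set (RV d)), (∀ s, MeasurableSet (A s)) →
      prefixLaw d μ t (Set.univ.pi A) = ∏ s : Fin t, Ps s (A s)

/-- The set of i.i.d. sequential laws with marginals in `PP`. -/
def iidLaws (PP : Set (Measure (RV d))) : Set (Measure (Seq d)) :=
  {μ | ∃ P ∈ PP, IsIIDLaw d μ P}

/-- The set of independent-product sequential laws with all marginals in `PP`. -/
def productLaws (PP : Set (Measure (RV d))) : Set (Measure (Seq d)) :=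
  {μ | ∃ Ps : ℕ → Measure (RV d), (∀ t, Ps t ∈ PP) ∧ IsProductLaw d μ Ps}




/-- The density of the `d`-dimensional Gaussian with mean `m` and covariance matrix `S`. -/
def gaussDensityFn (m : RV d) (S : Matrix (Fin d) (Fin d) ℝ) (x : RV d) : ℝ :=
  (2 * Real.pi) ^ (-(d : ℝ) / 2) * S.det ^ (-(1 : ℝ) / 2) *
    Real.exp (-(1 / 2) * ((x - m) ⬝ᵥ (S⁻¹ *ᵥ (x - m))))

/-- A finite mixture of nondegenerate Gaussian densities. -/
def IsGaussianMixture (g : RV d → ℝ) : Prop :=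
  ∃ (k : ℕ) (α : Fin k → ℝ) (ms : Fin k → RV d) (Ss : Fin k → Matrix (Fin d) (Fin d) ℝ),
    (∀ i, 0 ≤ α i) ∧ (∑ i, α i = 1) ∧ (∀ i, (Ss i).PosDef) ∧
    g = fun x => ∑ i, α i * gaussDensityFn d (ms i) (Ss i) x

/-- A log-concave nonnegative function on `ℝ^d`. -/
def IsLogConcaveFn (p : RV d → ℝ) : Prop :=
  (∀ x, 0 ≤ p x) ∧
    ∀ (x y : RV d) (l : ℝ), 0 ≤ l → l ≤ 1 →
      p x ^ l * p y ^ (1 - l) ≤ p (l • x + (1 - l) • y)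

/-- A log-concave probability density on `ℝ^d`. -/
def IsLogConcaveDensity (p : RV d → ℝ) : Prop :=
  Measurable p ∧ IsLogConcaveFn d p ∧ ∫ x, p x = 1

/-- The set `𝓛` of laws on `ℝ^d` with a log-concave Lebesgue density. -/
def logConcaveLaws : Set (Measure (RV d)) :=
  {P | IsProbabilityMeasure P ∧ ∃ p : RV d → ℝ, Measurable p ∧ IsLogConcaveFn d p ∧
    P = volume.withDensity fun x => ENNReal.ofReal (p x)}

/-- The set `𝒢` of nondegenerate Gaussian laws on `ℝ^d`. -/
def gaussianLaws : Set (Measure (RV d)) :=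
  {P | ∃ (m : RV d) (S : Matrix (Fin d) (Fin d) ℝ), S.PosDef ∧
    P = volume.withDensity fun x => ENNReal.ofReal (gaussDensityFn d m S x)}

/-- An estimator sequence: a measurable family of (strictly positive) predictable
probability density estimates. -/
def IsEstimatorSeq (E : (t : ℕ) → (Fin t → RV d) → RV d → ℝ) : Prop :=
  (∀ t, Measurable fun q : (Fin t → RV d) × RV d => E t q.1 q.2) ∧
  (∀ t h x, 0 < E t h x) ∧ (∀ t h, ∫ x, E t h x = 1)

/-- The universal likelihood ratio (ULR) process. Time `t` corresponds to having observed
the `t` samples `ω 0, …, ω (t-1)`. -/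
def ULR (E : (t : ℕ) → (Fin t → RV d) → RV d → ℝ) (t : ℕ) (ω : Seq d) : ℝ :=
  if t ≤ d then 1 else
    (∏ j ∈ Finset.Ico d t, E j (fun i : Fin j => ω i) (ω j)) /
      ⨆ p : {p : RV d → ℝ // IsLogConcaveDensity d p}, ∏ j ∈ Finset.Ico d t, p.1 (ω j)

/-- The prediction (cumulative log-loss) regret of the estimator sequence `E` relative to
the density of `P`. -/
def regret (P : Measure (RV d)) (E : (t : ℕ) → (Fin t → RV d) → RV d → ℝ)
    (t : ℕ) (ω : Seq d) : ℝ :=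
  ∑ j ∈ Finset.range t,
    (Real.log ((P.rnDeriv volume (ω j)).toReal) - Real.log (E j (fun i : Fin j => ω i) (ω j)))

/-- The Hellinger distance between two laws on `ℝ^d` (via their Lebesgue densities). -/
def hellinger (P Q : Measure (RV d)) : ℝ :=
  Real.sqrt ((1 / 2) *
    ∫ x, (Real.sqrt ((P.rnDeriv volume x).toReal) - Real.sqrt ((Q.rnDeriv volume x).toReal)) ^ 2)

/-- The Hellinger distance from `P` to the class of log-concave laws. -/
def dHLC (P : Measure (RV d)) : ℝ :=
  sInf {r | ∃ L ∈ logConcaveLaws d, r = hellinger d P L}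

/-- The Kullback–Leibler divergence. -/
def klDivR {α : Type*} [MeasurableSpace α] (P Q : Measure α) : EReal :=
  if P ≪ Q ∧ Integrable (fun x => Real.log ((P.rnDeriv Q x).toReal)) P
  then ((∫ x, Real.log ((P.rnDeriv Q x).toReal) ∂P : ℝ) : EReal) else ⊤

/-- Membership in `𝒟₁`. -/
def MemD1 (P : Measure (RV d)) : Prop :=
  IsProbabilityMeasure P ∧ P ≪ volume ∧
  Integrable (fun x => max 0 (Real.log ((P.rnDeriv volume x).toReal))) P ∧
  Integrable (fun x => Real.sqrt (∑ i, (x i) ^ 2)) P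

/-- The log-likelihood gap `σ_t(P)` between the true density and the log-concave maximum
likelihood. -/
def sigmaT (P : Measure (RV d)) (t : ℕ) (ω : Seq d) : ℝ :=
  (∑ j ∈ Finset.range t, Real.log ((P.rnDeriv volume (ω j)).toReal)) -
    ⨆ p : {p : RV d → ℝ // IsLogConcaveDensity d p},
      ∑ j ∈ Finset.range t, Real.log (p.1 (ω j))

/-- The mean vector of `P`. -/
def meanVec (P : Measure (RV d)) : RV d := fun i => ∫ x, x i ∂P

/-- `Δ_P = min_{‖v‖=1} E_P |⟨v, X − E_P X⟩|`. -/
def DeltaP (P : Measure (RV d)) : ℝ :=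
  sInf {r | ∃ v : RV d, (∑ i, (v i) ^ 2) = 1 ∧
    r = ∫ x, |∑ i, v i * (x i - meanVec d P i)| ∂P}

/-- The class `𝒟_{Box,Lip,B}`: laws with a `1`-Lipschitz density supported on `[-1,1]^d`
taking values in `[1/B, B]` there. -/
def DBoxLip (B : ℝ) : Set (Measure (RV d)) :=
  {P | IsProbabilityMeasure P ∧ ∃ p : RV d → ℝ, Measurable p ∧
    P = volume.withDensity (fun x => ENNReal.ofReal (p x)) ∧
    (∀ x, ¬ (∀ i, |x i| ≤ 1) → p x = 0) ∧
    (∀ x, (∀ i, |x i| ≤ 1) → 1 / B ≤ p x ∧ p x ≤ B) ∧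
    (∀ x y, (∀ i, |x i| ≤ 1) → (∀ i, |y i| ≤ 1) →
      |p x - p y| ≤ Real.sqrt (∑ i, (x i - y i) ^ 2))}



/-- The `L¹` distance between the Lebesgue densities of two laws. -/
def L1dist (P Q : Measure (RV d)) : ℝ :=
  ∫ x, |(P.rnDeriv volume x).toReal - (Q.rnDeriv volume x).toReal|

/-- The closure of a family of laws with densities in the `L¹` distance between densities. -/
def L1closure (PP : Set (Measure (RV d))) : Set (Measure (RV d)) :=
  {Q | IsProbabilityMeasure Q ∧ Q ≪ (volume : Measure (RV d)) ∧
    ∃ Pn : ℕ → Measure (RV d), (∀ n, Pn n ∈ PP) ∧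
      Tendsto (fun n => L1dist d (Pn n) Q) atTop (nhds 0)}

theorem pi_withDensity {ι : Type*} [Fintype ι] {X : ι → Type*} [∀ i, MeasurableSpace (X i)]
    (γ : ∀ i, Measure (X i)) [∀ i, IsProbabilityMeasure (γ i)] (f : ∀ i, X i → ENNReal)
    (hf : ∀ i, Measurable (f i)) [∀ i, SigmaFinite ((γ i).withDensity (f i))] :
    Measure.pi (fun i => (γ i).withDensity (f i)) =
      (Measure.pi γ).withDensity (fun x => ∏ i, f i (x i)) := by
  refine Measure.pi_eq fun A hA => ?_
  have hm : ∀ i, Measurable ((A i).indicator (f i)) := fun i => (hf i).indicator (hA i)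
  have hind := lintegral_prod_eq_prod_lintegral_of_indepFun univ _
    (iIndepFun_pi (μ := γ) fun i => (hm i).aemeasurable)
    fun i => (hm i).comp (measurable_pi_apply i)
  rw [withDensity_apply _ (MeasurableSet.univ_pi hA),
    ← lintegral_indicator (MeasurableSet.univ_pi hA)]
  trans ∫⁻ x, ∏ i, (A i).indicator (f i) (x i) ∂Measure.pi γ
  · refine lintegral_congr fun x => ?_
    by_cases hx : x ∈ Set.univ.pi A
    · rw [Set.indicator_of_mem hx]
      exact Finset.prod_congr rfl fun i _ => (Set.indicator_of_mem (hx i trivial) _).symm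
    · rw [Set.indicator_of_notMem hx]
      simp only [Set.mem_univ_pi, not_forall] at hx
      obtain ⟨i, hi⟩ := hx
      exact (Finset.prod_eq_zero (Finset.mem_univ i) (Set.indicator_of_notMem hi _)).symm
  · rw [hind]
    refine Finset.prod_congr rfl fun i _ => ?_
    rw [withDensity_apply _ (hA i), ← lintegral_indicator (hA i),
      (measurePreserving_eval γ i).lintegral_comp (hm i)]

theorem pi_eq_withDensity_rnDeriv {ι : Type*} [Fintype ι] {X : ι → Type*}
    [∀ i, MeasurableSpace (X i)] (P γ : ∀ i, Measure (X i)) [∀ i, IsProbabilityMeasure (γ i)]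
    [∀ i, SigmaFinite (P i)] (h : ∀ i, P i ≪ γ i) :
    Measure.pi P = (Measure.pi γ).withDensity (fun x => ∏ i, (P i).rnDeriv (γ i) (x i)) := by
  have hP : (fun i => (γ i).withDensity ((P i).rnDeriv (γ i))) = P :=
    funext fun i => Measure.withDensity_rnDeriv_eq _ _ (h i)
  have : ∀ i, SigmaFinite ((γ i).withDensity ((P i).rnDeriv (γ i))) := fun i => by
    rw [Measure.withDensity_rnDeriv_eq _ _ (h i)]; infer_instance
  conv_lhs => rw [← hP]
  exact pi_withDensity γ _ fun i => Measure.measurable_rnDeriv _ _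

theorem pi_absolutelyContinuous {ι : Type*} [Fintype ι] {X : ι → Type*}
    [∀ i, MeasurableSpace (X i)] (P γ : ∀ i, Measure (X i)) [∀ i, IsProbabilityMeasure (γ i)]
    [∀ i, SigmaFinite (P i)] (h : ∀ i, P i ≪ γ i) : Measure.pi P ≪ Measure.pi γ := by
  rw [pi_eq_withDensity_rnDeriv P γ h]
  exact withDensity_absolutelyContinuous _ _

theorem rnDeriv_pi {ι : Type*} [Fintype ι] {X : ι → Type*}
    [∀ i, MeasurableSpace (X i)] (P γ : ∀ i, Measure (X i)) [∀ i, IsProbabilityMeasure (γ i)]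
    [∀ i, SigmaFinite (P i)] (h : ∀ i, P i ≪ γ i) :
    (Measure.pi P).rnDeriv (Measure.pi γ) =ᵐ[Measure.pi γ]
      fun x => ∏ i, (P i).rnDeriv (γ i) (x i) := by
  conv_lhs => rw [pi_eq_withDensity_rnDeriv P γ h]
  exact Measure.rnDeriv_withDensity _ (Finset.measurable_prod _ fun i _ =>
    (Measure.measurable_rnDeriv _ _).comp (measurable_pi_apply i))

theorem abs_prod_sub_prod_le {ι : Type*} [Fintype ι] [LinearOrder ι] (f g : ι → ℝ)
    (hf : ∀ i, 0 ≤ f i) (hg : ∀ i, 0 ≤ g i) :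
    |∏ i, f i - ∏ i, g i| ≤
      ∑ i, ∏ j, if j < i then g j else if i < j then f j else |f j - g j| := by
  have key := Finset.prod_sub_ordered univ f (fun i => f i - g i)
  simp only [sub_sub_cancel] at key
  rw [key, sub_sub_cancel]
  refine (Finset.abs_sum_le_sum_abs _ _).trans (Finset.sum_le_sum fun i _ => le_of_eq ?_)
  have hi : ({j ∈ {j ∈ univ | ¬ j < i} | ¬ i < j} : Finset ι) = {i} := by
    ext j; simp [le_antisymm_iff, and_comm]
  have hij : ({j ∈ {j ∈ univ | ¬ j < i} | i < j} : Finset ι) =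
      ({j | i < j} : Finset ι) := by
    ext j; simpa using le_of_lt
  rw [Finset.prod_ite, Finset.prod_ite, hi, hij, Finset.prod_singleton, abs_mul, abs_mul,
    abs_of_nonneg (Finset.prod_nonneg fun j _ => hg j),
    abs_of_nonneg (Finset.prod_nonneg fun j _ => hf j)]
  ring

theorem integral_abs_prod_sub_prod_le {ι : Type*} [Fintype ι] [LinearOrder ι] {X : ι → Type*}
    [∀ i, MeasurableSpace (X i)] (γ : ∀ i, Measure (X i)) [∀ i, SigmaFinite (γ i)]
    (f g : ∀ i, X i → ℝ) (hf : ∀ i x, 0 ≤ f i x) (hg : ∀ i x, 0 ≤ g i x)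
    (hfi : ∀ i, Integrable (f i) (γ i)) (hgi : ∀ i, Integrable (g i) (γ i))
    (hf1 : ∀ i, ∫ x, f i x ∂γ i = 1) (hg1 : ∀ i, ∫ x, g i x ∂γ i = 1) :
    ∫ x, |∏ i, f i (x i) - ∏ i, g i (x i)| ∂Measure.pi γ ≤
      ∑ i, ∫ x, |f i x - g i x| ∂γ i := by
  let φ : ∀ _ j : ι, X j → ℝ := fun i j =>
    if j < i then g j else if i < j then f j else fun x => |f j x - g j x|
  have hφ : ∀ i j, Integrable (φ i j) (γ j) := by
    intro i j
    dsimp only [φ]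
    split_ifs
    exacts [hgi j, hfi j, ((hfi j).sub (hgi j)).abs]
  have hint : ∀ i, Integrable (fun x : ∀ j, X j => ∏ j, φ i j (x j)) (Measure.pi γ) :=
    fun i => Integrable.fintype_prod_dep (hφ i)
  calc ∫ x, |∏ i, f i (x i) - ∏ i, g i (x i)| ∂Measure.pi γ
      ≤ ∫ x, ∑ i, ∏ j, φ i j (x j) ∂Measure.pi γ := by
        refine integral_mono
          ((Integrable.fintype_prod_dep hfi).sub (Integrable.fintype_prod_dep hgi)).abs
          (integrable_finsetSum _ fun i _ => hint i) fun x => ?_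
        refine (abs_prod_sub_prod_le (fun i => f i (x i)) (fun i => g i (x i))
          (fun i => hf i _) (fun i => hg i _)).trans (le_of_eq ?_)
        refine Finset.sum_congr rfl fun i _ => Finset.prod_congr rfl fun j _ => ?_
        dsimp only [φ]
        split_ifs <;> rfl
    _ = ∑ i, ∏ j, ∫ x, φ i j x ∂γ j := by
        rw [integral_finsetSum _ fun i _ => hint i]
        exact Finset.sum_congr rfl fun i _ => integral_fintype_prod_eq_prod _
    _ = ∑ i, ∫ x, |f i x - g i x| ∂γ i := by
        refine Finset.sum_congr rfl fun i _ => ?_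
        rw [Finset.prod_eq_single_of_mem i (Finset.mem_univ i)]
        · simp [φ]
        · intro j _ hji
          rcases lt_or_gt_of_ne hji with h | h
          · simp [φ, h, hg1]
          · simp [φ, h, h.not_gt, hf1]

/-- The `L¹` distance between densities does not depend on the reference measure. -/
theorem integral_abs_rnDeriv_sub {α : Type*} [MeasurableSpace α] (P Q ν γ : Measure α)
    [SigmaFinite P] [SigmaFinite Q] [SigmaFinite ν] [SigmaFinite γ]
    (hP : P ≪ ν) (hQ : Q ≪ ν) (hν : ν ≪ γ) :
    ∫ x, |(P.rnDeriv γ x).toReal - (Q.rnDeriv γ x).toReal| ∂γ =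
      ∫ x, |(P.rnDeriv ν x).toReal - (Q.rnDeriv ν x).toReal| ∂ν := by
  rw [← integral_rnDeriv_smul hν]
  refine integral_congr_ae ?_
  filter_upwards [Measure.rnDeriv_mul_rnDeriv (κ := γ) hP,
    Measure.rnDeriv_mul_rnDeriv (κ := γ) hQ] with x hx hy
  rw [← hx, ← hy, Pi.mul_apply, Pi.mul_apply, ENNReal.toReal_mul, ENNReal.toReal_mul, ← sub_mul,
    abs_mul, abs_of_nonneg ENNReal.toReal_nonneg, smul_eq_mul, mul_comm]

instance isProbabilityMeasure_stdGaussian : IsProbabilityMeasure (stdGaussian d) := by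
  unfold stdGaussian; infer_instance

theorem volume_absolutelyContinuous_stdGaussian :
    (volume : Measure (RV d)) ≪ stdGaussian d := by
  rw [volume_pi]
  exact pi_absolutelyContinuous _ _ fun _ => gaussianReal_absolutelyContinuous' 0 one_ne_zero

theorem measurable_prefixMap (t : ℕ) : Measurable (prefixMap d t) :=
  measurable_pi_lambda _ fun s => measurable_pi_apply (s : ℕ)

variable {d}

theorem IsProductLaw.prefixLaw_eq_pi {μ : Measure (Seq d)} {Ps : ℕ → Measure (RV d)}
    [∀ t, IsProbabilityMeasure (Ps t)] (h : IsProductLaw d μ Ps) (t : ℕ) :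
    prefixLaw d μ t = Measure.pi fun s : Fin t => Ps s :=
  (Measure.pi_eq (h.2 t)).symm

theorem IsGamma.isProductLaw {Γ : Measure (Seq d)} (h : IsGamma d Γ) :
    IsProductLaw d Γ fun _ => stdGaussian d := h

theorem isProductLaw_infinitePi (Ps : ℕ → Measure (RV d)) [∀ t, IsProbabilityMeasure (Ps t)] :
    IsProductLaw d (Measure.infinitePi Ps) Ps := by
  refine ⟨inferInstance, fun t A hA => ?_⟩
  let B : ℕ → Set (RV d) := fun s => if hs : s < t then A ⟨s, hs⟩ else Set.univ
  have hB : ∀ s : Fin t, B s = A s := fun s => by simp [B]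
  have hpre : prefixMap d t ⁻¹' Set.univ.pi A = Set.pi (Finset.range t : Set ℕ) B := by
    ext ω
    simp only [Set.mem_preimage, Set.mem_pi, Finset.coe_range, Set.mem_Iio,
      prefixMap]
    exact ⟨fun h s hs => by simpa [B, hs] using h ⟨s, hs⟩ trivial, fun h s _ => hB s ▸ h s s.2⟩
  have hBm : ∀ s ∈ Finset.range t, MeasurableSet (B s) := fun s hs => by
    simpa [B, Finset.mem_range.mp hs] using hA _
  rw [prefixLaw, Measure.map_apply (measurable_prefixMap d t) (MeasurableSet.univ_pi hA), hpre,
    Measure.infinitePi_pi (μ := Ps) hBm, ← Fin.prod_univ_eq_prod_range (fun s => Ps s (B s)) t]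
  simp only [hB]

theorem IsProductLaw.locAC {Γ μ : Measure (Seq d)} (hΓ : IsGamma d Γ)
    {Ps : ℕ → Measure (RV d)} [∀ t, IsProbabilityMeasure (Ps t)] (hPs : ∀ t, Ps t ≪ volume)
    (h : IsProductLaw d μ Ps) : LocAC d μ Γ := by
  intro t
  rw [h.prefixLaw_eq_pi, hΓ.isProductLaw.prefixLaw_eq_pi]
  exact pi_absolutelyContinuous _ _ fun s =>
    (hPs s).trans (volume_absolutelyContinuous_stdGaussian d)

theorem integral_abs_Z_sub_le {Γ μ ν : Measure (Seq d)} (hΓ : IsGamma d Γ)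
    {Ps Qs : ℕ → Measure (RV d)} [∀ t, IsProbabilityMeasure (Ps t)]
    [∀ t, IsProbabilityMeasure (Qs t)] (hPs : ∀ t, Ps t ≪ volume) (hQs : ∀ t, Qs t ≪ volume)
    (hμ : IsProductLaw d μ Ps) (hν : IsProductLaw d ν Qs) (t : ℕ) :
    ∫ ω, |Z d μ Γ t ω - Z d ν Γ t ω| ∂Γ ≤ ∑ s : Fin t, L1dist d (Ps s) (Qs s) := by
  have hvol := volume_absolutelyContinuous_stdGaussian d
  have hmap : ∫ ω, |Z d μ Γ t ω - Z d ν Γ t ω| ∂Γ =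
      ∫ x, |((prefixLaw d μ t).rnDeriv (prefixLaw d Γ t) x).toReal -
        ((prefixLaw d ν t).rnDeriv (prefixLaw d Γ t) x).toReal| ∂prefixLaw d Γ t := by
    conv_rhs => arg 1; rw [prefixLaw]
    rw [integral_map (measurable_prefixMap d t).aemeasurable]
    · rfl
    · exact ((Measure.measurable_rnDeriv _ _).ennreal_toReal.sub
        (Measure.measurable_rnDeriv _ _).ennreal_toReal).abs.aestronglyMeasurable
  rw [hmap, hμ.prefixLaw_eq_pi, hν.prefixLaw_eq_pi, hΓ.isProductLaw.prefixLaw_eq_pi]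
  calc _ = ∫ x : Fin t → RV d, |∏ s : Fin t, ((Ps s).rnDeriv (stdGaussian d) (x s)).toReal -
        ∏ s : Fin t, ((Qs s).rnDeriv (stdGaussian d) (x s)).toReal|
          ∂Measure.pi fun _ => stdGaussian d := by
        refine integral_congr_ae ?_
        filter_upwards [rnDeriv_pi (fun s : Fin t => Ps s) (fun _ => stdGaussian d)
            fun s => (hPs s).trans hvol,
          rnDeriv_pi (fun s : Fin t => Qs s) (fun _ => stdGaussian d)
            fun s => (hQs s).trans hvol] with x hx hy
        rw [hx, hy, ENNReal.toReal_prod, ENNReal.toReal_prod]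
    _ ≤ ∑ s : Fin t, ∫ x, |((Ps s).rnDeriv (stdGaussian d) x).toReal -
        ((Qs s).rnDeriv (stdGaussian d) x).toReal| ∂stdGaussian d := by
        refine integral_abs_prod_sub_prod_le (fun _ : Fin t => stdGaussian d)
          (fun s x => ((Ps s).rnDeriv (stdGaussian d) x).toReal)
          (fun s x => ((Qs s).rnDeriv (stdGaussian d) x).toReal)
          (fun _ _ => ENNReal.toReal_nonneg) (fun _ _ => ENNReal.toReal_nonneg)
          (fun _ => Measure.integrable_toReal_rnDeriv) (fun _ => Measure.integrable_toReal_rnDeriv)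
          (fun s => ?_) (fun s => ?_)
        · simp [Measure.integral_toReal_rnDeriv ((hPs s).trans hvol)]
        · simp [Measure.integral_toReal_rnDeriv ((hQs s).trans hvol)]
    _ = _ := Finset.sum_congr rfl fun s _ =>
        integral_abs_rnDeriv_sub _ _ _ _ (hPs s) (hQs s) hvol

variable (d)

/-- For a family `PP` of laws with a.e. strictly positive Lebesgue densities,
the closed fork-convex hull of the product laws over `PP` contains the product laws over the
`L¹` closure of `PP`. -/
theorem statement7 (Γ : Measure (Seq d)) (hΓ : IsGamma d Γ)
    (PP : Set (Measure (RV d)))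
    (hdens : ∀ P ∈ PP, IsProbabilityMeasure P ∧ P ≪ (volume : Measure (RV d)))
    (hpos : ∀ P ∈ PP, ∀ᵐ x ∂(volume : Measure (RV d)), 0 < P.rnDeriv volume x) :
    productLaws d (L1closure d PP) ⊆ clfconv d Γ (productLaws d PP) := by
  rintro μ ⟨Qs, hQs, hμ⟩
  choose hQprob hQac Pn hPn hlim using hQs
  have : ∀ n t, IsProbabilityMeasure (Pn t n) := fun n t => (hdens _ (hPn t n)).1
  refine ⟨hμ.1, hμ.locAC hΓ hQac, fun n => Measure.infinitePi fun t => Pn t n, fun n => ?_,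
    fun t => ?_⟩
  · exact Set.mem_sInter.mpr fun S hS => hS.1 ⟨_, fun t => hPn t n, isProductLaw_infinitePi _⟩
  · refine squeeze_zero (fun n => integral_nonneg fun ω => abs_nonneg _)
      (fun n => integral_abs_Z_sub_le hΓ (fun t => (hdens _ (hPn t n)).2) hQac
        (isProductLaw_infinitePi _) hμ t) ?_
    simpa using tendsto_finsetSum (univ : Finset (Fin t)) fun s _ => hlim s

end SeqTest
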